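/- arXiv:2404.12949 — 3 statements merged into one kernel-verified Lean document; each statement's English description precedes it below -/
import Mathlib

section
/- The worst-case regret of randomized single-threshold stopping rules over all distributions of i.i.d. random variables with values in [0,1] equals the upper value of the infinite two-person zero-sum game on the unit square with payoff kernel A: A*_n(𝒯_{s,r}; 𝓕_{[0,1]}) = sup_μ inf_λ Ā(λ, μ), where λ and μ range over all Borel probability measures on [0,1]. -/
/-!
Fix a law `mu` on `[0,1]` with distribution function `F`, and let `q = F_p(θ)` be the probability
that `τ_p(θ)` rejects an observation. Writing the prophet value and the reward as integrals of tail
probabilities over `u ∈ [0,1]` gives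

`M_n(F) - E[X_τ] = ∫₀¹ (1 - F(u)^n - (∑_{i<n-1} q^i) C(u) - q^(n-1) (1 - F(u))) du`,

where `C(u)` is `1 - q` for `u < θ` and `1 - F(u)` for `u ≥ θ`. By the geometric sum formula the
integrand is `A(q, F(u))` in both cases (`Aker_of_ge`, `Aker_of_le`), since `F(u) ≤ q` below the
threshold and `q ≤ F(u)` above it. Hence the regret is `∫ A(q, y) dν(y)` with `ν` the law of `F(U)`
for uniform `U` (`regret_eq`).

As `(θ, p)` varies, `q` takes every value in `[0,1]` (`exists_rejProb`), and mixing over `q` does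
not lower the infimum (`sInf_mixed_eq_sInf_pure`), so the least regret against `mu` is
`inf_λ Ā(λ, ν)` (`sInf_regret_eq`). Finally `mu ↦ ν` is an involution on laws on `[0,1]`
(`cdfLaw_cdfLaw`): the distribution function of `ν` is the right-continuous inverse of `F`. The two
suprema are therefore taken over the same set of numbers.
-/

open MeasureTheory ProbabilityTheory Set

noncomputable section

/-- The payoff kernel `A(x,y)` on the unit square (eq. (3.2)). -/
def Aker (n : ℕ) (x y : ℝ) : ℝ :=
  if y < x then y * (x ^ (n - 1) - y ^ (n - 1))
  else (1 - y) * ∑ k ∈ Finset.Icc 1 (n - 1), (y ^ k - x ^ k)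

/-- `Ā(λ, μ) = ∫₀¹∫₀¹ A(x,y) dλ(x) dμ(y)`. -/
def Abar (n : ℕ) (lam mu : Measure ℝ) : ℝ :=
  ∫ y, (∫ x, Aker n x y ∂lam) ∂mu

/-- A Borel probability measure on `[0,1]` (encoded as a probability measure on `ℝ`
concentrated on `[0,1]`). -/
def IsProb01 (mu : Measure ℝ) : Prop :=
  IsProbabilityMeasure mu ∧ mu (Icc (0 : ℝ) 1)ᶜ = 0

/-- Coordinate process on the canonical space `(ℝ × ℝ)^n`: the value `X_t`. -/
def canonX (n t : ℕ) (ω : Fin n → ℝ × ℝ) : ℝ :=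
  if h : t - 1 < n then (ω ⟨t - 1, h⟩).1 else 0

/-- Coordinate process on the canonical space `(ℝ × ℝ)^n`: the auxiliary uniform
randomization variable `U_t`. -/
def canonU (n t : ℕ) (ω : Fin n → ℝ × ℝ) : ℝ :=
  if h : t - 1 < n then (ω ⟨t - 1, h⟩).2 else 0

/-- The canonical measure on `(ℝ × ℝ)^n` making `X_1, …, X_n` i.i.d. with law `μ` and
`U_1, …, U_n` i.i.d. uniform on `[0,1]`, all mutually independent. -/
def canonMeas (n : ℕ) (mu : Measure ℝ) : Measure (Fin n → ℝ × ℝ) :=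
  Measure.pi fun _ => mu.prod (volume.restrict (Icc (0 : ℝ) 1))

/-- The randomized single-threshold stopping time `τ_p(θ)` driven by uniform variables. -/
def stopTimeU {Ω : Type*} (n : ℕ) (X U : ℕ → Ω → ℝ) (θ p : ℝ) (ω : Ω) : ℕ :=
  sInf ({t | 1 ≤ t ∧ t ≤ n - 1 ∧ (θ < X t ω ∨ (X t ω = θ ∧ U t ω ≤ p))} ∪ {n})

/-- The reward `E[X_{τ_p(θ)}]` when `X_1, …, X_n` are i.i.d. with law `μ`. -/
def rewardC (n : ℕ) (mu : Measure ℝ) (θ p : ℝ) : ℝ :=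
  ∫ ω, canonX n (stopTimeU n (canonX n) (canonU n) θ p ω) ω ∂(canonMeas n mu)

/-- The prophet value `M_n(F) = E[max_{1≤t≤n} X_t]` for `X_1, …, X_n` i.i.d. with law `μ`. -/
def MnC (n : ℕ) (mu : Measure ℝ) : ℝ :=
  ∫ ω, Finset.fold max 0 (fun t => canonX n t ω) (Finset.Icc 1 n) ∂(canonMeas n mu)

/-! ### The kernel and the lower envelope of the game -/

lemma IsProb01.ae_mem {mu : Measure ℝ} (h : IsProb01 mu) : ∀ᵐ x ∂mu, x ∈ Icc (0 : ℝ) 1 := by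
  rw [ae_iff]; exact h.2

lemma Aker_nonneg (n : ℕ) {x y : ℝ} (hx : x ∈ Icc (0 : ℝ) 1) (hy : y ∈ Icc (0 : ℝ) 1) :
    0 ≤ Aker n x y := by
  unfold Aker
  split_ifs with h
  · exact mul_nonneg hy.1 (sub_nonneg.2 (pow_le_pow_left₀ hy.1 h.le _))
  · exact mul_nonneg (sub_nonneg.2 hy.2) (Finset.sum_nonneg fun k _ =>
      sub_nonneg.2 (pow_le_pow_left₀ hx.1 (not_lt.1 h) _))

lemma Aker_le (n : ℕ) {x y : ℝ} (hx : x ∈ Icc (0 : ℝ) 1) (hy : y ∈ Icc (0 : ℝ) 1) :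
    Aker n x y ≤ n + 1 := by
  unfold Aker
  split_ifs with h
  · have h1 : x ^ (n - 1) ≤ 1 := pow_le_one₀ hx.1 hx.2
    have h2 : 0 ≤ y ^ (n - 1) := pow_nonneg hy.1 _
    have h3 : x ^ (n - 1) - y ^ (n - 1) ≤ 1 := by linarith
    have : y * (x ^ (n - 1) - y ^ (n - 1)) ≤ 1 := by
      nlinarith [hy.1, hy.2]
    have : (0 : ℝ) ≤ n := Nat.cast_nonneg n
    linarith
  · have h1 : ∑ k ∈ Finset.Icc 1 (n - 1), (y ^ k - x ^ k) ≤ ∑ k ∈ Finset.Icc 1 (n - 1), (1 : ℝ) :=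
      Finset.sum_le_sum fun k _ => by
        have := pow_le_one₀ hy.1 hy.2 (n := k)
        have := pow_nonneg hx.1 k
        linarith
    have h2 : ∑ k ∈ Finset.Icc 1 (n - 1), (1 : ℝ) ≤ n := by
      simp
    have h3 : 0 ≤ ∑ k ∈ Finset.Icc 1 (n - 1), (y ^ k - x ^ k) := Finset.sum_nonneg fun k _ =>
      sub_nonneg.2 (pow_le_pow_left₀ hx.1 (not_lt.1 h) _)
    nlinarith [hy.1, hy.2]

lemma measurable_Aker (n : ℕ) : Measurable fun z : ℝ × ℝ => Aker n z.1 z.2 := by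
  unfold Aker
  refine Measurable.ite (measurableSet_lt measurable_snd measurable_fst) ?_ ?_
  · fun_prop
  · fun_prop

lemma integrable_Aker_left (n : ℕ) {mu : Measure ℝ} (h : IsProb01 mu) {q : ℝ}
    (hq : q ∈ Icc (0 : ℝ) 1) : Integrable (fun y => Aker n q y) mu := by
  have := h.1
  refine Integrable.of_bound
    ((measurable_Aker n).comp (measurable_const.prodMk measurable_id)).aestronglyMeasurable
    (n + 1) ?_
  filter_upwards [h.ae_mem] with y hy
  rw [Real.norm_eq_abs, abs_of_nonneg (Aker_nonneg n hq hy)]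
  exact Aker_le n hq hy

lemma integrable_Aker_prod (n : ℕ) {lam mu : Measure ℝ} (hl : IsProb01 lam) (h : IsProb01 mu) :
    Integrable (fun z : ℝ × ℝ => Aker n z.2 z.1) (mu.prod lam) := by
  have := h.1
  have := hl.1
  refine Integrable.of_bound
    ((measurable_Aker n).comp (measurable_snd.prodMk measurable_fst)).aestronglyMeasurable
    (n + 1) ?_
  filter_upwards [Measure.quasiMeasurePreserving_fst.ae h.ae_mem,
    Measure.quasiMeasurePreserving_snd.ae hl.ae_mem] with z hy hx
  rw [Real.norm_eq_abs, abs_of_nonneg (Aker_nonneg n hx hy)]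
  exact Aker_le n hx hy

lemma integral_Aker_nonneg (n : ℕ) {mu : Measure ℝ} (h : IsProb01 mu) {q : ℝ}
    (hq : q ∈ Icc (0 : ℝ) 1) : 0 ≤ ∫ y, Aker n q y ∂mu :=
  integral_nonneg_of_ae (by filter_upwards [h.ae_mem] with y hy using Aker_nonneg n hq hy)

/-- Against a fixed strategy `mu`, mixed strategies of the minimizer do no better than pure
ones. -/
lemma sInf_mixed_eq_sInf_pure (n : ℕ) {mu : Measure ℝ} (h : IsProb01 mu) :
    sInf {v : ℝ | ∃ lam : Measure ℝ, IsProb01 lam ∧ v = Abar n lam mu} =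
      sInf {v : ℝ | ∃ q ∈ Icc (0 : ℝ) 1, v = ∫ y, Aker n q y ∂mu} := by
  have := h.1
  have hdirac : ∀ q ∈ Icc (0 : ℝ) 1, IsProb01 (Measure.dirac q) := fun q hq =>
    ⟨inferInstance, by
      rw [Measure.dirac_apply' _ measurableSet_Icc.compl]; simpa using hq⟩
  have hswap : ∀ lam, IsProb01 lam → Abar n lam mu = ∫ x, ∫ y, Aker n x y ∂mu ∂lam := by
    intro lam hl
    have := hl.1
    exact integral_integral_swap (f := fun y x => Aker n x y) (integrable_Aker_prod n hl h)
  have hbdd : BddBelow {v : ℝ | ∃ q ∈ Icc (0 : ℝ) 1, v = ∫ y, Aker n q y ∂mu} :=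
    ⟨0, by rintro _ ⟨q, hq, rfl⟩; exact integral_Aker_nonneg n h hq⟩
  have hle : ∀ lam, IsProb01 lam →
      sInf {v : ℝ | ∃ q ∈ Icc (0 : ℝ) 1, v = ∫ y, Aker n q y ∂mu} ≤ Abar n lam mu := by
    intro lam hl
    have := hl.1
    rw [hswap lam hl]
    have h2 : Integrable (fun x => ∫ y, Aker n x y ∂mu) lam :=
      (integrable_Aker_prod n hl h).integral_prod_right
    have h3 := integral_mono_ae (μ := lam) (integrable_const
      (sInf {v : ℝ | ∃ q ∈ Icc (0 : ℝ) 1, v = ∫ y, Aker n q y ∂mu})) h2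
      (by filter_upwards [hl.ae_mem] with x hx using csInf_le hbdd ⟨x, hx, rfl⟩)
    simpa using h3
  have h01 : (0 : ℝ) ∈ Icc (0 : ℝ) 1 := by simp
  apply le_antisymm
  · refine le_csInf ⟨_, 0, h01, rfl⟩ ?_
    rintro _ ⟨q, hq, rfl⟩
    refine csInf_le ⟨sInf {v : ℝ | ∃ q ∈ Icc (0 : ℝ) 1, v = ∫ y, Aker n q y ∂mu}, ?_⟩
      ⟨Measure.dirac q, hdirac q hq, ?_⟩
    · rintro _ ⟨lam, hl, rfl⟩; exact hle lam hl
    · simp [Abar]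
  · refine le_csInf ⟨_, Measure.dirac 0, hdirac 0 h01, rfl⟩ ?_
    rintro _ ⟨lam, hl, rfl⟩
    exact hle lam hl

/-! ### Exchanging a law with its quantile transform -/

/-- The uniform distribution on `[0,1]`. -/
def unif : Measure ℝ := volume.restrict (Icc (0 : ℝ) 1)

instance : IsProbabilityMeasure unif := ⟨by simp [unif]⟩

lemma unif_Iic {p : ℝ} (hp : p ∈ Icc (0 : ℝ) 1) : unif.real (Iic p) = p := by
  have : Iic p ∩ Icc (0 : ℝ) 1 = Icc 0 p := by
    ext x; simp only [mem_inter_iff, mem_Iic, mem_Icc]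
    exact ⟨fun h => ⟨h.2.1, h.1⟩, fun h => ⟨h.2, h.1, h.2.trans hp.2⟩⟩
  rw [measureReal_def, unif, Measure.restrict_apply measurableSet_Iic, this]
  simp [hp.1]

lemma unif_Iio {p : ℝ} (hp : p ∈ Icc (0 : ℝ) 1) : unif.real (Iio p) = p := by
  have : unif (Iio p) = unif (Iic p) := by
    have : NullSingletonClass unif := by unfold unif; infer_instance
    exact measure_congr Iio_ae_eq_Iic
  rw [measureReal_def, this, ← measureReal_def, unif_Iic hp]

lemma unif_isProb01 : IsProb01 unif := by
  refine ⟨inferInstance, ?_⟩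
  rw [unif, Measure.restrict_apply measurableSet_Icc.compl]
  simp

/-- The law of `F(U)`, where `F` is the distribution function of `mu` and `U` is uniform on
`[0,1]`. -/
def cdfLaw (mu : Measure ℝ) : Measure ℝ := unif.map (cdf mu)

lemma measurable_cdf' (mu : Measure ℝ) : Measurable (cdf mu) := (monotone_cdf mu).measurable

lemma cdfLaw_isProb01 (mu : Measure ℝ) : IsProb01 (cdfLaw mu) := by
  refine ⟨Measure.isProbabilityMeasure_map (measurable_cdf' mu).aemeasurable, ?_⟩
  rw [cdfLaw, Measure.map_apply (measurable_cdf' mu) measurableSet_Icc.compl]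
  convert measure_empty (μ := unif)
  ext x
  simp [cdf_nonneg, cdf_le_one]

lemma IsProb01.cdf_one {mu : Measure ℝ} (h : IsProb01 mu) {x : ℝ} (hx : 1 ≤ x) :
    cdf mu x = 1 := by
  have := h.1
  rw [cdf_eq_real, measureReal_def, (prob_compl_eq_zero_iff measurableSet_Iic).1, ENNReal.toReal_one]
  refine measure_mono_null (compl_subset_compl.2 fun y hy => ?_) h.2
  exact hy.2.trans hx

lemma IsProb01.cdf_neg {mu : Measure ℝ} (h : IsProb01 mu) {x : ℝ} (hx : x < 0) :
    cdf mu x = 0 := by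
  have := h.1
  rw [cdf_eq_real, measureReal_def, measure_mono_null _ h.2, ENNReal.toReal_zero]
  intro y hy hy'
  exact absurd (hy'.1.trans hy) (not_le.2 hx)

lemma cdf_mem (mu : Measure ℝ) (x : ℝ) : cdf mu x ∈ Icc (0 : ℝ) 1 :=
  ⟨cdf_nonneg _ _, cdf_le_one _ _⟩

/-- The distribution function of `cdfLaw mu` is the right-continuous inverse of that of `mu`, so
inverting twice gives back `mu`. -/
lemma cdfLaw_cdfLaw {mu : Measure ℝ} (h : IsProb01 mu) : cdfLaw (cdfLaw mu) = mu := by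
  have := h.1
  have := (cdfLaw_isProb01 mu).1
  have := (cdfLaw_isProb01 (cdfLaw mu)).1
  refine Measure.eq_of_cdf _ _ ?_
  ext y
  set G := cdf mu with hG
  set F := cdf (cdfLaw mu) with hF
  have hFu : ∀ u, F u = unif.real (G ⁻¹' Iic u) := by
    intro u
    rw [hF, cdf_eq_real, cdfLaw, measureReal_def,
      Measure.map_apply (measurable_cdf' mu) measurableSet_Iic, measureReal_def]
  rcases lt_or_ge y 0 with hy | hy
  · rw [(cdfLaw_isProb01 _).cdf_neg hy, h.cdf_neg hy]
  rcases le_or_gt 1 y with hy1 | hy1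
  · rw [(cdfLaw_isProb01 _).cdf_one hy1, h.cdf_one hy1]
  have h1 : cdf (cdfLaw (cdfLaw mu)) y = unif.real (F ⁻¹' Iic y) := by
    rw [cdf_eq_real, cdfLaw, measureReal_def,
      Measure.map_apply (measurable_cdf' _) measurableSet_Iic, measureReal_def]
  rw [h1]
  have hGy := cdf_mem mu y
  apply le_antisymm
  · rw [← unif_Iic hGy]
    refine measureReal_mono (fun u hu => ?_)
    by_contra hlt
    rw [mem_Iic, not_le] at hlt
    -- right continuity of `G` gives `z > y` with `G z < u`, hence `F u ≥ z > y`
    have hc : Filter.Tendsto G (nhdsWithin y (Ioi y)) (nhds (G y)) :=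
      (G.right_continuous y).mono_left (nhdsWithin_mono _ Ioi_subset_Ici_self)
    have hev := (hc.eventually (gt_mem_nhds hlt)).and (Ioo_mem_nhdsGT hy1)
    obtain ⟨z, hz, hz1⟩ := hev.exists
    have : z ≤ F u := by
      rw [hFu, ← unif_Iic (p := z) ⟨hy.trans hz1.1.le, hz1.2.le⟩]
      refine measureReal_mono (fun w hw => ?_)
      exact ((monotone_cdf mu) hw).trans hz.le
    exact absurd (this.trans hu) (not_le.2 hz1.1)
  · conv_lhs => rw [← unif_Iio hGy]
    refine measureReal_mono (fun u hu => ?_)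
    show F u ≤ y
    rw [hFu]
    conv_rhs => rw [← unif_Iic (p := y) ⟨hy, hy1.le⟩]
    refine measureReal_mono (fun w hw => ?_)
    by_contra hlt
    rw [mem_Iic, not_le] at hlt
    exact absurd (((monotone_cdf mu) hlt.le).trans hw) (not_le.2 hu)

/-- Layer-cake formula for `[0,1]`-valued variables. -/
lemma layer_cake {α : Type*} [MeasurableSpace α] (P : Measure α) [IsProbabilityMeasure P]
    {f : α → ℝ} (hf : Measurable f) (h0 : ∀ᵐ a ∂P, 0 ≤ f a) (h1 : ∀ᵐ a ∂P, f a ≤ 1) :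
    ∫ a, f a ∂P = ∫ u, P.real {a | u < f a} ∂unif := by
  have hint : Integrable f P := Integrable.of_bound hf.aestronglyMeasurable 1 (by
    filter_upwards [h0, h1] with a ha hb
    rwa [Real.norm_eq_abs, abs_of_nonneg ha])
  rw [hint.integral_eq_integral_meas_lt h0, unif, integral_Icc_eq_integral_Ioc]
  refine setIntegral_eq_of_subset_of_forall_sdiff_eq_zero measurableSet_Ioi
    (fun x hx => hx.1) ?_
  intro u hu
  have hu1 : 1 < u := by
    by_contra h
    exact hu.2 ⟨hu.1, not_lt.1 h⟩
  rw [measureReal_def, ENNReal.toReal_eq_zero_iff]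
  left
  rw [measure_eq_zero_iff_ae_notMem]
  filter_upwards [h1] with a ha hb
  exact absurd ((lt_trans hu1 hb).trans_le ha) (lt_irrefl _)

/-! ### Reward and prophet value of a fixed law -/

/-- The observations (value, randomization variable) at which `τ_p(θ)` stops. -/
def stopSet (θ p : ℝ) : Set (ℝ × ℝ) := {z | θ < z.1 ∨ (z.1 = θ ∧ z.2 ≤ p)}

lemma measurableSet_stopSet (θ p : ℝ) : MeasurableSet (stopSet θ p) :=
  (measurableSet_lt measurable_const measurable_fst).union
    ((measurableSet_eq_fun measurable_fst measurable_const).inter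
      (measurableSet_le measurable_snd measurable_const))

/-- The probability `F_p(θ)` that `τ_p(θ)` rejects a given observation. -/
def rejProb (mu : Measure ℝ) (θ p : ℝ) : ℝ := (mu.prod unif).real (stopSet θ p)ᶜ

/-- The contribution of observation `j` to the event that `τ_p(θ)` stops at observation `i`:
rejection for `j < i`, the value collected for `j = i` (collected unconditionally at the horizon,
the last index), and no constraint for `j > i`. -/
def stopFactor (n : ℕ) (θ p : ℝ) (i j : Fin n) (z : ℝ × ℝ) : ℝ :=
  if j < i then (stopSet θ p)ᶜ.indicator 1 z
  else if j = i then
    (if (i : ℕ) + 1 < n then (stopSet θ p).indicator Prod.fst z else z.1)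
  else 1

lemma canonX_succ {n : ℕ} (i : Fin n) (ω : Fin n → ℝ × ℝ) :
    canonX n (i + 1) ω = (ω i).1 := by simp [canonX]

lemma canonU_succ {n : ℕ} (i : Fin n) (ω : Fin n → ℝ × ℝ) :
    canonU n (i + 1) ω = (ω i).2 := by simp [canonU]

/-- The collected reward, split according to the time at which the rule stops. -/
lemma canonX_stopTimeU {n : ℕ} (hn : 2 ≤ n) (θ p : ℝ) (ω : Fin n → ℝ × ℝ) :
    canonX n (stopTimeU n (canonX n) (canonU n) θ p ω) ω =
      ∑ i, ∏ j, stopFactor n θ p i j (ω j) := by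
  set T := stopTimeU n (canonX n) (canonU n) θ p ω with hT
  have hmem : T ∈ ({t | 1 ≤ t ∧ t ≤ n - 1 ∧ (θ < canonX n t ω ∨
      (canonX n t ω = θ ∧ canonU n t ω ≤ p))} ∪ {n} : Set ℕ) :=
    Nat.sInf_mem ⟨n, Or.inr rfl⟩
  have hTn : T ≤ n := Nat.sInf_le (Or.inr rfl)
  have hT1 : 1 ≤ T := by
    rcases hmem with h | h
    · exact h.1
    · rw [mem_singleton_iff] at h; omega
  have hbefore : ∀ i : Fin n, (i : ℕ) + 1 < n → ω i ∈ stopSet θ p → T ≤ i + 1 := by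
    intro i hi hS
    refine Nat.sInf_le (Or.inl ⟨by omega, by omega, ?_⟩)
    rwa [canonX_succ, canonU_succ]
  obtain ⟨i, hi⟩ : ∃ i : Fin n, (i : ℕ) + 1 = T := ⟨⟨T - 1, by omega⟩, by simp; omega⟩
  have hat : (i : ℕ) + 1 < n → ω i ∈ stopSet θ p := by
    intro h
    rcases hmem with h' | h'
    · have := h'.2.2
      rwa [← hi, canonX_succ, canonU_succ] at this
    · rw [mem_singleton_iff] at h'; omega
  -- only the summand of the actual stopping time survives: a later one contains the rejection
  -- factor of an accepted observation, an earlier one collects a rejected observation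
  rw [← hi, canonX_succ, Finset.sum_eq_single i, Finset.prod_eq_single i]
  · by_cases h : (i : ℕ) + 1 < n
    · simp [stopFactor, h, hat h]
    · simp [stopFactor, h]
  · intro j _ hji
    by_cases h : j < i
    · have : ω j ∉ stopSet θ p := fun hS => by
        have h1 := hbefore j (by have := i.2; omega) hS
        omega
      simp [stopFactor, h, this]
    · simp [stopFactor, h, hji]
  · simp
  · intro k _ hk
    rcases lt_or_gt_of_ne hk with h | h
    · refine Finset.prod_eq_zero (Finset.mem_univ k) ?_
      have hk1 : (k : ℕ) + 1 < n := by have := i.2; omega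
      have : ω k ∉ stopSet θ p := fun hS => by
        have h1 := hbefore k hk1 hS
        omega
      simp [stopFactor, hk1, this]
    · refine Finset.prod_eq_zero (Finset.mem_univ i) ?_
      have : ω i ∈ stopSet θ p := hat (by have := k.2; omega)
      simp [stopFactor, h, this]
  · simp

lemma integrable_fst {mu : Measure ℝ} (h : IsProb01 mu) :
    Integrable (Prod.fst : ℝ × ℝ → ℝ) (mu.prod unif) := by
  have := h.1
  refine Integrable.of_bound measurable_fst.aestronglyMeasurable 1 ?_
  filter_upwards [Measure.quasiMeasurePreserving_fst.ae h.ae_mem] with z hz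
  rw [Real.norm_eq_abs, abs_of_nonneg hz.1]
  exact hz.2

lemma integrable_stopFactor {mu : Measure ℝ} (h : IsProb01 mu) (n : ℕ) (θ p : ℝ) (i j : Fin n) :
    Integrable (stopFactor n θ p i j) (mu.prod unif) := by
  have := h.1
  unfold stopFactor
  split_ifs
  · exact (integrable_const (1 : ℝ)).indicator (measurableSet_stopSet θ p).compl
  · exact (integrable_fst h).indicator (measurableSet_stopSet θ p)
  · exact integrable_fst h
  · exact integrable_const _

/-- The reward of `τ_p(θ)`: a geometric sum over the stopping times before the horizon, plus the
forced stop at time `n`. -/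
lemma rewardC_eq {n : ℕ} (hn : 2 ≤ n) {mu : Measure ℝ} (h : IsProb01 mu) (θ p : ℝ) :
    rewardC n mu θ p =
      (∑ i ∈ Finset.range (n - 1), rejProb mu θ p ^ i) *
          (∫ z, (stopSet θ p).indicator Prod.fst z ∂(mu.prod unif)) +
        rejProb mu θ p ^ (n - 1) * ∫ z, z.1 ∂(mu.prod unif) := by
  have := h.1
  set q := rejProb mu θ p with hq
  set c := ∫ z, (stopSet θ p).indicator Prod.fst z ∂(mu.prod unif) with hc
  set m := ∫ z, z.1 ∂(mu.prod unif) with hm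
  have hterm : ∀ i : Fin n, ∫ ω, ∏ j, stopFactor n θ p i j (ω j) ∂(canonMeas n mu) =
      q ^ (i : ℕ) * if (i : ℕ) + 1 < n then c else m := by
    intro i
    have h1 : ∫ ω, ∏ j, stopFactor n θ p i j (ω j) ∂(canonMeas n mu) =
        ∏ j, ∫ z, stopFactor n θ p i j z ∂(mu.prod unif) :=
      integral_fintype_prod_eq_prod (stopFactor n θ p i)
    have h2 : ∀ j, ∫ z, stopFactor n θ p i j z ∂(mu.prod unif) =
        (if j < i then q else 1) * (if j = i then (if (i : ℕ) + 1 < n then c else m) else 1) := by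
      intro j
      unfold stopFactor
      by_cases hji : j < i
      · simp only [hji, if_true, hji.ne, if_false, mul_one]
        rw [integral_indicator_one (measurableSet_stopSet θ p).compl]
        rfl
      · by_cases hj : j = i
        · simp only [hj, lt_irrefl, if_false, if_true, one_mul]
          split_ifs <;> rfl
        · simp [hji, hj]
    rw [h1, Finset.prod_congr rfl fun j _ => h2 j, Finset.prod_mul_distrib,
      Finset.prod_ite_eq' Finset.univ i, if_pos (Finset.mem_univ i), Finset.prod_ite,
      Finset.prod_const, Finset.prod_const_one, mul_one]
    have hcard : (Finset.univ.filter (· < i)).card = (i : ℕ) := by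
      rw [← Fin.card_Iio i]
      congr 1
      ext j
      simp
    rw [hcard]
  unfold rewardC
  simp_rw [canonX_stopTimeU hn]
  rw [integral_finsetSum _ fun i _ => ?_]
  · rw [Finset.sum_congr rfl fun i _ => hterm i,
      Fin.sum_univ_eq_sum_range (fun i => q ^ i * if i + 1 < n then c else m) n]
    obtain ⟨k, rfl⟩ : ∃ k, n = k + 1 := ⟨n - 1, by omega⟩
    rw [Finset.sum_range_succ, Finset.sum_mul]
    simp only [Nat.add_sub_cancel, lt_irrefl, if_false]
    congr 1
    refine Finset.sum_congr rfl fun i hi => ?_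
    rw [if_pos (by have := Finset.mem_range.1 hi; omega)]
  · exact Integrable.fintype_prod fun j => integrable_stopFactor h n θ p i j

lemma prod_real_fst {mu : Measure ℝ} (h : IsProb01 mu) (s : Set ℝ) :
    (mu.prod unif).real (Prod.fst ⁻¹' s) = mu.real s := by
  have := h.1
  rw [← prod_univ, measureReal_prod_prod]
  simp

lemma real_Ioi {mu : Measure ℝ} (h : IsProb01 mu) (u : ℝ) : mu.real (Ioi u) = 1 - cdf mu u := by
  have := h.1
  rw [cdf_eq_real, ← compl_Iic, probReal_compl_eq_one_sub measurableSet_Iic]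

lemma integral_fst_eq {mu : Measure ℝ} (h : IsProb01 mu) :
    ∫ z, z.1 ∂(mu.prod unif) = ∫ u, (1 - cdf mu u) ∂unif := by
  have := h.1
  have hae := (Measure.quasiMeasurePreserving_fst (μ := mu) (ν := unif)).ae h.ae_mem
  rw [layer_cake (mu.prod unif) measurable_fst (hae.mono fun z hz => hz.1)
    (hae.mono fun z hz => hz.2)]
  refine integral_congr_ae (Filter.Eventually.of_forall fun u => ?_)
  exact (prod_real_fst h (Ioi u)).trans (real_Ioi h u)

lemma unif_ae_mem : ∀ᵐ u ∂unif, u ∈ Icc (0 : ℝ) 1 := unif_isProb01.ae_mem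

/-- The layers of the value collected from one observation: for `u` below the threshold, an
accepted observation exceeds `u`; for `u` above the threshold, an observation exceeding `u` is
accepted. -/
lemma integral_stop_eq {mu : Measure ℝ} (h : IsProb01 mu) (θ p : ℝ) :
    ∫ z, (stopSet θ p).indicator Prod.fst z ∂(mu.prod unif) =
      ∫ u, (if u < θ then 1 - rejProb mu θ p else 1 - cdf mu u) ∂unif := by
  have := h.1
  have hae := (Measure.quasiMeasurePreserving_fst (μ := mu) (ν := unif)).ae h.ae_mem
  rw [layer_cake (mu.prod unif) (measurable_fst.indicator (measurableSet_stopSet θ p))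
    (hae.mono fun z hz => indicator_apply_nonneg fun _ => hz.1)
    (hae.mono fun z hz => indicator_apply_le' (fun _ => hz.2) fun _ => zero_le_one)]
  refine integral_congr_ae ?_
  filter_upwards [unif_ae_mem] with u hu
  split_ifs with hlt
  · rw [rejProb, probReal_compl_eq_one_sub (measurableSet_stopSet θ p), sub_sub_cancel]
    congr 1
    ext z
    by_cases hz : z ∈ stopSet θ p
    · have : u < z.1 := by
        rcases hz with hz | hz
        · exact hlt.trans hz
        · exact hlt.trans_eq hz.1.symm
      simp [hz, this]
    · simp [hz, hu.1]
  · rw [← real_Ioi h, ← prod_real_fst h]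
    congr 1
    ext z
    by_cases hz : z ∈ stopSet θ p
    · simp [hz]
    · have : ¬ u < z.1 := fun hz' => hz (Or.inl ((not_lt.1 hlt).trans_lt hz'))
      simp only [mem_ofPred_eq, indicator_of_notMem hz, mem_preimage, mem_Ioi, this, iff_false]
      exact not_lt.2 hu.1

lemma canonMeas_prob (n : ℕ) {mu : Measure ℝ} (h : IsProb01 mu) :
    IsProbabilityMeasure (canonMeas n mu) := by
  have := h.1
  have : IsProbabilityMeasure (mu.prod (volume.restrict (Icc (0 : ℝ) 1))) :=
    inferInstanceAs (IsProbabilityMeasure (mu.prod unif))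
  unfold canonMeas
  infer_instance

/-- The maximum is at most `u ≥ 0` exactly when every observation is. -/
lemma fold_max_preimage (n : ℕ) {u : ℝ} (hu : 0 ≤ u) :
    {ω : Fin n → ℝ × ℝ | Finset.fold max 0 (fun t => canonX n t ω) (Finset.Icc 1 n) ≤ u} =
      univ.pi fun _ => Prod.fst ⁻¹' Iic u := by
  ext ω
  simp only [mem_ofPred_eq, Finset.fold_max_le, hu, true_and, Finset.mem_Icc, mem_pi, mem_univ,
    mem_preimage, mem_Iic, forall_const]
  constructor
  · intro H i
    rw [← canonX_succ]
    exact H _ ⟨by omega, by omega⟩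
  · rintro H t ⟨h1, h2⟩
    obtain ⟨i, rfl⟩ : ∃ i : Fin n, (i : ℕ) + 1 = t := ⟨⟨t - 1, by omega⟩, by simp; omega⟩
    rw [canonX_succ]
    exact H i

lemma measurable_fold_max (n : ℕ) : Measurable fun ω : Fin n → ℝ × ℝ =>
    Finset.fold max 0 (fun t => canonX n t ω) (Finset.Icc 1 n) := by
  refine measurable_of_Iic fun u => ?_
  rcases lt_or_ge u 0 with hu | hu
  · convert MeasurableSet.empty
    ext ω
    simp [Finset.fold_max_le, hu]
  · have := fold_max_preimage n hu
    simp only [preimage, mem_Iic] at this ⊢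
    rw [this]
    exact MeasurableSet.univ_pi fun _ => measurable_fst measurableSet_Iic

/-- The prophet value, since the maximum has distribution function `F ^ n`. -/
lemma MnC_eq (n : ℕ) {mu : Measure ℝ} (h : IsProb01 mu) :
    MnC n mu = ∫ u, (1 - cdf mu u ^ n) ∂unif := by
  have := h.1
  have := canonMeas_prob n h
  have hcdf : ∀ u, 0 ≤ u → (canonMeas n mu).real {ω : Fin n → ℝ × ℝ |
      Finset.fold max 0 (fun t => canonX n t ω) (Finset.Icc 1 n) ≤ u} = cdf mu u ^ n := by
    intro u hu
    have h1 : (canonMeas n mu) (univ.pi fun _ => Prod.fst ⁻¹' Iic u) =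
        ∏ _i : Fin n, (mu.prod unif) (Prod.fst ⁻¹' Iic u) := Measure.pi_pi _ _
    rw [fold_max_preimage n hu, measureReal_def, h1, Finset.prod_const, ENNReal.toReal_pow,
      ← measureReal_def, prod_real_fst h, cdf_eq_real]
    simp
  have hle : ∀ᵐ ω ∂(canonMeas n mu),
      Finset.fold max 0 (fun t => canonX n t ω) (Finset.Icc 1 n) ≤ 1 := by
    have h1 := hcdf 1 zero_le_one
    rw [h.cdf_one le_rfl, one_pow] at h1
    rw [ae_iff]
    have hm : MeasurableSet {ω : Fin n → ℝ × ℝ |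
        Finset.fold max 0 (fun t => canonX n t ω) (Finset.Icc 1 n) ≤ 1} :=
      measurable_fold_max n measurableSet_Iic
    have h2 := probReal_compl_eq_one_sub (μ := canonMeas n mu) hm
    rw [h1, sub_self, measureReal_eq_zero_iff] at h2
    exact h2
  unfold MnC
  rw [layer_cake _ (measurable_fold_max n)
    (Filter.Eventually.of_forall fun ω => (Finset.le_fold_max _).2 (Or.inl le_rfl)) hle]
  refine integral_congr_ae ?_
  filter_upwards [unif_ae_mem] with u hu
  have hm : MeasurableSet {ω : Fin n → ℝ × ℝ |
      Finset.fold max 0 (fun t => canonX n t ω) (Finset.Icc 1 n) ≤ u} :=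
    measurable_fold_max n measurableSet_Iic
  rw [← hcdf u hu.1, ← probReal_compl_eq_one_sub hm]
  congr 1
  ext ω
  simp

/-! ### The regret as a payoff of the game -/

lemma rejProb_mem {mu : Measure ℝ} (h : IsProb01 mu) (θ p : ℝ) :
    rejProb mu θ p ∈ Icc (0 : ℝ) 1 := by
  have := h.1
  exact ⟨measureReal_nonneg, measureReal_le_one⟩

lemma cdf_le_rejProb {mu : Measure ℝ} (h : IsProb01 mu) {θ p u : ℝ} (hu : u < θ) :
    cdf mu u ≤ rejProb mu θ p := by
  have := h.1
  rw [cdf_eq_real, ← prod_real_fst h]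
  refine measureReal_mono fun z hz hS => ?_
  have hz' : z.1 ≤ u := hz
  rcases hS with hS | hS
  · linarith
  · linarith [hS.1]

lemma rejProb_le_cdf {mu : Measure ℝ} (h : IsProb01 mu) {θ p u : ℝ} (hu : θ ≤ u) :
    rejProb mu θ p ≤ cdf mu u := by
  have := h.1
  rw [cdf_eq_real, ← prod_real_fst h]
  refine measureReal_mono fun z hz => ?_
  by_contra hz'
  exact hz (Or.inl (hu.trans_lt (not_le.1 hz')))

lemma Aker_self (n : ℕ) (x : ℝ) : Aker n x x = 0 := by simp [Aker]

/-- The integrand of the regret below the threshold. -/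
lemma Aker_of_ge {n : ℕ} (hn : 2 ≤ n) {q y : ℝ} (hy : y ≤ q) :
    1 - y ^ n - (∑ i ∈ Finset.range (n - 1), q ^ i) * (1 - q) - q ^ (n - 1) * (1 - y) =
      Aker n q y := by
  obtain ⟨k, rfl⟩ : ∃ k, n = k + 1 := ⟨n - 1, by omega⟩
  rw [mul_comm, mul_neg_geom_sum]
  rcases hy.eq_or_lt with rfl | hlt
  · rw [Aker_self]; simp only [Nat.add_sub_cancel]; ring
  · rw [Aker, if_pos hlt]; simp only [Nat.add_sub_cancel]; ring

/-- The integrand of the regret above the threshold. -/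
lemma Aker_of_le {n : ℕ} (hn : 2 ≤ n) {q y : ℝ} (hy : q ≤ y) :
    1 - y ^ n - (∑ i ∈ Finset.range (n - 1), q ^ i) * (1 - y) - q ^ (n - 1) * (1 - y) =
      Aker n q y := by
  obtain ⟨k, rfl⟩ : ∃ k, n = k + 1 := ⟨n - 1, by omega⟩
  have h1 : ∑ i ∈ Finset.Icc 1 k, (y ^ i - q ^ i) = ∑ i ∈ Finset.range (k + 1), (y ^ i - q ^ i) := by
    rw [Finset.range_eq_Ico, Finset.sum_eq_sum_Ico_succ_bot (by omega)]
    simp only [pow_zero, sub_self, zero_add]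
    rfl
  rw [Aker, if_neg (not_lt.2 hy), ← mul_neg_geom_sum y]
  simp only [Nat.add_sub_cancel]
  rw [h1, Finset.sum_sub_distrib, Finset.sum_range_succ (fun i => q ^ i)]
  ring

/-- The regret of `τ_p(θ)` is the payoff of the pure strategy `F_p(θ)` against `cdfLaw mu`. -/
lemma regret_eq {n : ℕ} (hn : 2 ≤ n) {mu : Measure ℝ} (h : IsProb01 mu) (θ p : ℝ) :
    MnC n mu - rewardC n mu θ p = ∫ y, Aker n (rejProb mu θ p) y ∂(cdfLaw mu) := by
  have := h.1
  set q := rejProb mu θ p with hq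
  have hqm := rejProb_mem h θ p
  have hmeas : Measurable fun y => Aker n q y :=
    (measurable_Aker n).comp (measurable_const.prodMk measurable_id)
  have hF := measurable_cdf' mu
  have hb : ∀ f : ℝ → ℝ, Measurable f → (∀ u, f u ∈ Icc (0 : ℝ) 1) → Integrable f unif := by
    intro f hf hf1
    refine Integrable.of_bound hf.aestronglyMeasurable 1
      (Filter.Eventually.of_forall fun u => ?_)
    rw [Real.norm_eq_abs, abs_of_nonneg (hf1 u).1]
    exact (hf1 u).2
  have hsub : ∀ x : ℝ, x ∈ Icc (0 : ℝ) 1 → 1 - x ∈ Icc (0 : ℝ) 1 := fun x hx =>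
    ⟨by linarith [hx.2], by linarith [hx.1]⟩
  have i1 : Integrable (fun u => 1 - cdf mu u ^ n) unif :=
    hb _ (by fun_prop) fun u => hsub _
      ⟨pow_nonneg (cdf_nonneg _ _) _, pow_le_one₀ (cdf_nonneg _ _) (cdf_le_one _ _)⟩
  have i2 : Integrable (fun u => if u < θ then 1 - q else 1 - cdf mu u) unif :=
    hb _ (Measurable.ite measurableSet_Iio measurable_const (by fun_prop)) fun u => by
      split_ifs
      · exact hsub _ hqm
      · exact hsub _ (cdf_mem mu u)
  have i3 : Integrable (fun u => 1 - cdf mu u) unif :=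
    hb _ (by fun_prop) fun u => hsub _ (cdf_mem mu u)
  have i4 : Integrable (fun u => 1 - cdf mu u ^ n - (∑ i ∈ Finset.range (n - 1), q ^ i) *
      if u < θ then 1 - q else 1 - cdf mu u) unif := i1.sub (i2.const_mul _)
  rw [cdfLaw, integral_map hF.aemeasurable hmeas.aestronglyMeasurable, MnC_eq n h,
    rewardC_eq hn h, integral_fst_eq h, integral_stop_eq h θ p, ← sub_sub, ← integral_const_mul,
    ← integral_const_mul, ← integral_sub i1 (i2.const_mul _),
    ← integral_sub i4 (i3.const_mul _)]
  refine integral_congr_ae (Filter.Eventually.of_forall fun u => ?_)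
  simp only [← hq]
  split_ifs with hlt
  · exact Aker_of_ge hn (cdf_le_rejProb h hlt)
  · exact Aker_of_le hn (rejProb_le_cdf h (not_lt.1 hlt))

lemma rejProb_eq {mu : Measure ℝ} (h : IsProb01 mu) (θ : ℝ) {p : ℝ} (hp : p ∈ Icc (0 : ℝ) 1) :
    rejProb mu θ p = cdf mu θ - mu.real {θ} * p := by
  have := h.1
  have h1 : stopSet θ p = Prod.fst ⁻¹' Ioi θ ∪ {θ} ×ˢ Iic p := by
    ext z; simp [stopSet]
  have h2 : Disjoint (Prod.fst ⁻¹' Ioi θ) (({θ} : Set ℝ) ×ˢ Iic p) := by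
    rw [Set.disjoint_left]
    rintro z hz ⟨hz1, -⟩
    exact absurd hz1 (ne_of_gt hz)
  rw [rejProb, probReal_compl_eq_one_sub (measurableSet_stopSet θ p), h1,
    measureReal_union h2 ((measurableSet_singleton θ).prod measurableSet_Iic),
    prod_real_fst h, real_Ioi h, measureReal_prod_prod, unif_Iic hp]
  ring

/-- Randomization at atoms makes every rejection probability available. -/
lemma exists_rejProb {mu : Measure ℝ} (h : IsProb01 mu) {q : ℝ} (hq : q ∈ Icc (0 : ℝ) 1) :
    ∃ θ, 0 ≤ θ ∧ ∃ p ∈ Icc (0 : ℝ) 1, rejProb mu θ p = q := by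
  have := h.1
  set S : Set ℝ := {u | 0 ≤ u ∧ q ≤ cdf mu u} with hS
  have hbdd : BddBelow S := ⟨0, fun u hu => hu.1⟩
  have hne : S.Nonempty := ⟨1, zero_le_one, by rw [h.cdf_one le_rfl]; exact hq.2⟩
  set θ := sInf S with hθ
  have hθ0 : 0 ≤ θ := le_csInf hne fun u hu => hu.1
  have hge : q ≤ cdf mu θ := by
    have hc : Filter.Tendsto (cdf mu) (nhdsWithin θ (Ioi θ)) (nhds (cdf mu θ)) :=
      ((cdf mu).right_continuous θ).mono_left (nhdsWithin_mono _ Ioi_subset_Ici_self)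
    refine ge_of_tendsto hc ?_
    filter_upwards [self_mem_nhdsWithin] with u hu
    obtain ⟨w, hw, hwu⟩ := exists_lt_of_csInf_lt hne hu
    exact hw.2.trans (monotone_cdf mu hwu.le)
  -- `F(θ-) ≤ q`, because `F < q` to the left of the infimum
  have hle : mu.real (Iio θ) ≤ q := by
    have hc : ∀ u < θ, cdf mu u ≤ q := by
      intro u hu
      rcases lt_or_ge u 0 with h0 | h0
      · rw [h.cdf_neg h0]; exact hq.1
      · by_contra hlt
        exact absurd (csInf_le hbdd ⟨h0, (not_le.1 hlt).le⟩) (not_le.2 hu)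
    have hlim := (cdf mu).measure_Iio (tendsto_cdf_atBot mu) θ
    rw [measure_cdf, sub_zero] at hlim
    rw [measureReal_def, hlim]
    refine ENNReal.toReal_le_of_le_ofReal hq.1 (ENNReal.ofReal_le_ofReal ?_)
    refine le_of_tendsto ((monotone_cdf mu).tendsto_leftLim θ) ?_
    filter_upwards [self_mem_nhdsWithin] with u hu using hc u hu
  have hsplit : cdf mu θ = mu.real (Iio θ) + mu.real {θ} := by
    rw [cdf_eq_real, ← measureReal_union (by simp) (measurableSet_singleton θ), Iio_union_right]
  rcases (measureReal_nonneg (μ := mu) (s := {θ})).eq_or_lt with h0 | hpos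
  · refine ⟨θ, hθ0, 0, by simp, ?_⟩
    rw [rejProb_eq h θ (by simp)]
    linarith
  · have hp : (cdf mu θ - q) / mu.real {θ} ∈ Icc (0 : ℝ) 1 :=
      ⟨div_nonneg (by linarith) hpos.le, (div_le_one hpos).2 (by linarith)⟩
    refine ⟨θ, hθ0, _, hp, ?_⟩
    rw [rejProb_eq h θ hp, mul_div_cancel₀ _ hpos.ne', sub_sub_cancel]

/-- For a fixed law `mu`, the least regret is the lower envelope of the game at `cdfLaw mu`. -/
lemma sInf_regret_eq {n : ℕ} (hn : 2 ≤ n) {mu : Measure ℝ} (h : IsProb01 mu) :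
    sInf {v : ℝ | ∃ θ, 0 ≤ θ ∧ ∃ p ∈ Icc (0 : ℝ) 1, v = MnC n mu - rewardC n mu θ p} =
      sInf {v : ℝ | ∃ lam : Measure ℝ, IsProb01 lam ∧ v = Abar n lam (cdfLaw mu)} := by
  rw [sInf_mixed_eq_sInf_pure n (cdfLaw_isProb01 mu)]
  congr 1
  ext v
  constructor
  · rintro ⟨θ, -, p, -, rfl⟩
    exact ⟨_, rejProb_mem h θ p, regret_eq hn h θ p⟩
  · rintro ⟨q, hq, rfl⟩
    obtain ⟨θ, hθ, p, hp, rfl⟩ := exists_rejProb h hq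
    exact ⟨θ, hθ, p, hp, (regret_eq hn h θ p).symm⟩

/-- Theorem 2, eq. (3.5): the worst-case regret of randomized
single-threshold stopping rules over all laws on `[0,1]` equals `sup_μ inf_λ Ā(λ,μ)`
over Borel probability measures on `[0,1]`. -/
theorem worst_case_regret_eq_game_value (n : ℕ) (hn : 2 ≤ n) :
    sSup {r : ℝ | ∃ mu : Measure ℝ, IsProb01 mu ∧
        r = sInf {v : ℝ | ∃ θ, 0 ≤ θ ∧ ∃ p ∈ Icc (0 : ℝ) 1,
          v = MnC n mu - rewardC n mu θ p}} =
      sSup {s : ℝ | ∃ mu : Measure ℝ, IsProb01 mu ∧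
        s = sInf {v : ℝ | ∃ lam : Measure ℝ, IsProb01 lam ∧ v = Abar n lam mu}} := by
  congr 1
  ext r
  constructor
  · rintro ⟨mu, h, rfl⟩
    exact ⟨cdfLaw mu, cdfLaw_isProb01 mu, sInf_regret_eq hn h⟩
  · rintro ⟨mu, h, rfl⟩
    refine ⟨cdfLaw mu, cdfLaw_isProb01 mu, ?_⟩
    rw [sInf_regret_eq hn (cdfLaw_isProb01 mu), cdfLaw_cdfLaw h]
end
end

section
/- The kernel A is Lipschitz in each variable with constant n−1: for all x, x′, y, y′ ∈ [0,1], |A(x,y) − A(x′,y)| ≤ (n−1)·|x − x′| and |A(x,y) − A(x,y′)| ≤ (n−1)·|y − y′|. -/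
/-!
With `m = n - 1`, each section of the kernel is made of two polynomial pieces which agree (both
vanish) on the diagonal, so it suffices to bound the derivative of each piece by `m` on its own
subinterval (`abs_sub_le_of_two_pieces`).

* In `x`: for `y ≤ x` the derivative is `y * m * x ^ (m - 1)`; for `x ≤ y` it is
  `-(1 - y) * ∑ k x ^ (k - 1)`, of size at most `(1 - x) * ∑ k x ^ (k - 1) ≤ m`
  (`one_sub_mul_sum_deriv_le`).
* In `y`: for `y ≤ x` the derivative is `x ^ m - (m + 1) * y ^ m ∈ [-m, 1]`; for `x ≤ y`,
  the geometric sum turns the piece into `y - y ^ (m + 1) - (1 - y) * ∑ x ^ k`, with derivative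
  `1 - (m + 1) * y ^ m + ∑ x ^ k`. It is clearly at least `-m`, and at most `m` because the
  last term of the sum satisfies `x ^ m ≤ y ^ m` and the others are at most `1`.
-/
open Set

noncomputable section

/-- A function equal to `g` on `[0, c]` and to `h` on `[c, 1]` is `K`-Lipschitz on `[0, 1]` if the
derivatives of `g` and `h` are bounded by `K` on the respective subintervals. -/
lemma abs_sub_le_of_two_pieces {f g g' h h' : ℝ → ℝ} {c K : ℝ} (hc : c ∈ Icc (0 : ℝ) 1)
    (hfg : ∀ t ∈ Icc 0 c, f t = g t) (hfh : ∀ t ∈ Icc c 1, f t = h t)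
    (hg : ∀ t, HasDerivAt g (g' t) t) (hh : ∀ t, HasDerivAt h (h' t) t)
    (bg : ∀ t ∈ Icc 0 c, |g' t| ≤ K) (bh : ∀ t ∈ Icc c 1, |h' t| ≤ K) :
    ∀ s ∈ Icc (0 : ℝ) 1, ∀ t ∈ Icc (0 : ℝ) 1, |f s - f t| ≤ K * |s - t| := by
  have L : ∀ s ∈ Icc 0 c, ∀ t ∈ Icc 0 c, |f s - f t| ≤ K * |s - t| := by
    intro s hs t ht
    rw [hfg s hs, hfg t ht]
    exact (convex_Icc 0 c).norm_image_sub_le_of_norm_hasDerivWithin_le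
      (fun u _ => (hg u).hasDerivWithinAt) bg ht hs
  have R : ∀ s ∈ Icc c 1, ∀ t ∈ Icc c 1, |f s - f t| ≤ K * |s - t| := by
    intro s hs t ht
    rw [hfh s hs, hfh t ht]
    exact (convex_Icc c 1).norm_image_sub_le_of_norm_hasDerivWithin_le
      (fun u _ => (hh u).hasDerivWithinAt) bh ht hs
  have M : ∀ s ∈ Icc 0 c, ∀ t ∈ Icc c 1, |f s - f t| ≤ K * |s - t| := by
    intro s hs t ht
    have h1 := L s hs c ⟨hc.1, le_rfl⟩
    have h2 := R c ⟨le_rfl, hc.2⟩ t ht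
    have h3 := abs_sub_le (f s) (f c) (f t)
    rw [abs_of_nonpos (sub_nonpos.2 hs.2)] at h1
    rw [abs_of_nonpos (sub_nonpos.2 ht.1)] at h2
    rw [abs_of_nonpos (sub_nonpos.2 (hs.2.trans ht.1))]
    linarith
  intro s hs t ht
  rcases le_total s c with h1 | h1 <;> rcases le_total t c with h2 | h2
  · exact L s ⟨hs.1, h1⟩ t ⟨ht.1, h2⟩
  · exact M s ⟨hs.1, h1⟩ t ⟨h2, ht.2⟩
  · rw [abs_sub_comm, abs_sub_comm s]
    exact M t ⟨ht.1, h2⟩ s ⟨h1, hs.2⟩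
  · exact R s ⟨h1, hs.2⟩ t ⟨h2, ht.2⟩

lemma one_sub_mul_sum_deriv_le (m : ℕ) {x : ℝ} (h0 : 0 ≤ x) (h1 : x ≤ 1) :
    (1 - x) * ∑ k ∈ Finset.range m, ((k : ℝ) + 1) * x ^ k ≤ m := by
  -- The extra term `m * x ^ m` makes the induction telescope: each step contributes `x ^ m ≤ 1`.
  have key : (1 - x) * ∑ k ∈ Finset.range m, ((k : ℝ) + 1) * x ^ k + m * x ^ m ≤ m := by
    induction m with
    | zero => simp
    | succ m ih =>
      rw [Finset.sum_range_succ, pow_succ]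
      push_cast
      have := pow_le_one₀ (n := m) h0 h1
      linarith
  have : 0 ≤ (m : ℝ) * x ^ m := by positivity
  linarith

lemma Aker_of_le_s16 {p : ℕ} {x y : ℝ} (h : y ≤ x) :
    Aker (p + 2) x y = y * (x ^ (p + 1) - y ^ (p + 1)) := by
  rcases h.lt_or_eq with h | rfl
  · simp [Aker, h]
  · simp [Aker]

lemma Aker_of_ge_s16 {p : ℕ} {x y : ℝ} (h : x ≤ y) :
    Aker (p + 2) x y =
      y - y ^ (p + 2) - (1 - y) * ∑ k ∈ Finset.range (p + 1), x ^ (k + 1) := by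
  have hI : Finset.Icc 1 (p + 1) = Finset.Ico 1 (p + 2) := rfl
  have hgeom := mul_neg_geom_sum y (p + 1)
  have hs : ∑ k ∈ Finset.range (p + 1), y ^ (k + 1)
      = y * ∑ k ∈ Finset.range (p + 1), y ^ k := by
    rw [Finset.mul_sum]
    exact Finset.sum_congr rfl fun k _ => by ring
  simp only [Aker, not_lt.2 h, if_false]
  rw [show p + 2 - 1 = p + 1 from rfl, hI, Finset.sum_Ico_eq_sum_range,
    show p + 2 - 1 = p + 1 from rfl]
  simp only [add_comm 1]
  rw [Finset.sum_sub_distrib, hs]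
  linear_combination y * hgeom

/-- Lemma 1: the kernel `A` is Lipschitz in each variable on the unit
square with constant `n − 1`. -/
theorem Aker_lipschitz (n : ℕ) (hn : 2 ≤ n) :
    (∀ x ∈ Icc (0 : ℝ) 1, ∀ x' ∈ Icc (0 : ℝ) 1, ∀ y ∈ Icc (0 : ℝ) 1,
      |Aker n x y - Aker n x' y| ≤ ((n : ℝ) - 1) * |x - x'|) ∧
    (∀ x ∈ Icc (0 : ℝ) 1, ∀ y ∈ Icc (0 : ℝ) 1, ∀ y' ∈ Icc (0 : ℝ) 1,
      |Aker n x y - Aker n x y'| ≤ ((n : ℝ) - 1) * |y - y'|) := by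
  obtain ⟨p, rfl⟩ := Nat.exists_eq_add_of_le' hn
  have hK : ((p + 2 : ℕ) : ℝ) - 1 = p + 1 := by push_cast; ring
  have hp : (0 : ℝ) ≤ p := p.cast_nonneg
  rw [hK]
  constructor
  · intro x hx x' hx' y hy
    refine abs_sub_le_of_two_pieces (f := fun x => Aker (p + 2) x y)
      (g' := fun x => -((1 - y) * ∑ k ∈ Finset.range (p + 1), ((k : ℝ) + 1) * x ^ k))
      (h' := fun x => y * (((p : ℝ) + 1) * x ^ p)) hy
      (fun t ht => Aker_of_ge_s16 ht.2) (fun t ht => Aker_of_le_s16 ht.1) ?_ ?_ ?_ ?_ x hx x' hx'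
    · intro t
      refine HasDerivAt.const_sub _ (HasDerivAt.const_mul _ (HasDerivAt.fun_sum fun k _ => ?_))
      simpa using hasDerivAt_pow (k + 1) t
    · intro t
      refine HasDerivAt.const_mul _ (HasDerivAt.sub_const _ ?_)
      simpa using hasDerivAt_pow (p + 1) t
    · intro t ht
      have hS : 0 ≤ ∑ k ∈ Finset.range (p + 1), ((k : ℝ) + 1) * t ^ k :=
        Finset.sum_nonneg fun k _ => by have := ht.1; positivity
      have h1 := one_sub_mul_sum_deriv_le (p + 1) ht.1 (ht.2.trans hy.2)
      push_cast at h1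
      rw [abs_neg, abs_of_nonneg (mul_nonneg (sub_nonneg.2 hy.2) hS)]
      exact (mul_le_mul_of_nonneg_right (by linarith [ht.2]) hS).trans h1
    · intro t ht
      have ht0 : 0 ≤ t := hy.1.trans ht.1
      have hy0 := hy.1
      have h1 := pow_le_one₀ (n := p) ht0 ht.2
      have h2 : y * t ^ p ≤ 1 := mul_le_one₀ hy.2 (by positivity) h1
      rw [abs_of_nonneg (by positivity)]
      nlinarith
  · intro x hx y hy y' hy'
    refine abs_sub_le_of_two_pieces (f := fun y => Aker (p + 2) x y)
      (g := fun y => y * (x ^ (p + 1) - y ^ (p + 1)))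
      (g' := fun y => x ^ (p + 1) - ((p : ℝ) + 2) * y ^ (p + 1))
      (h' := fun y => 1 - ((p : ℝ) + 2) * y ^ (p + 1)
        + ∑ k ∈ Finset.range (p + 1), x ^ (k + 1)) hx
      (fun t ht => Aker_of_le_s16 ht.2) (fun t ht => Aker_of_ge_s16 ht.1) ?_ ?_ ?_ ?_ y hy y' hy'
    · intro t
      have h := (hasDerivAt_id' t).mul ((hasDerivAt_pow (p + 1) t).const_sub (x ^ (p + 1)))
      refine h.congr_deriv ?_
      push_cast
      ring
    · intro t
      have h := ((hasDerivAt_id' t).sub (hasDerivAt_pow (p + 2) t)).sub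
        (((hasDerivAt_id' t).const_sub 1).mul_const
          (∑ k ∈ Finset.range (p + 1), x ^ (k + 1)))
      refine h.congr_deriv ?_
      rw [show p + 2 - 1 = p + 1 from rfl]
      push_cast
      ring
    · intro t ht
      have h0 : 0 ≤ t ^ (p + 1) := pow_nonneg ht.1 _
      have h1 : t ^ (p + 1) ≤ x ^ (p + 1) := pow_le_pow_left₀ ht.1 ht.2 _
      have h2 := pow_le_one₀ (n := p + 1) hx.1 hx.2
      rw [abs_le]
      constructor <;> nlinarith
    · intro t ht
      have hx0 := hx.1
      have ht0 : 0 ≤ t := hx.1.trans ht.1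
      have h0 : 0 ≤ t ^ (p + 1) := pow_nonneg ht0 _
      have h1 : x ^ (p + 1) ≤ t ^ (p + 1) := pow_le_pow_left₀ hx.1 ht.1 _
      have h2 := pow_le_one₀ (n := p + 1) ht0 ht.2
      have hS0 : 0 ≤ ∑ k ∈ Finset.range p, x ^ (k + 1) :=
        Finset.sum_nonneg fun k _ => by positivity
      have hS1 : ∑ k ∈ Finset.range p, x ^ (k + 1) ≤ p := by
        simpa using Finset.sum_le_card_nsmul (Finset.range p) (fun k => x ^ (k + 1)) 1
          fun k _ => pow_le_one₀ hx.1 hx.2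
      have h3 : 0 ≤ x ^ (p + 1) := by positivity
      rw [Finset.sum_range_succ, abs_le]
      constructor <;> nlinarith
end
end

section
/- Let n ≥ 4 be an integer and set c_n = −ln(1 − (1 − e^{−1})² + 1/(n−1)). Then for every real c with 0 < c < c_n, the kernel value at x₀ = 1 − c/n and y₀ = 1 − 1/n satisfies R(x₀, y₀) = (1 − (1 − c/n)^{n−1}·(1 − 1/n)) / (1 − (1 − 1/n)ⁿ) < 1 − e^{−1}. -/
/-!
Write `E = e⁻¹`. Since `(1 - 1/n)ⁿ ≤ E`, the claimed inequality follows from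
`1 - (1 - E)² < (1 - c/n)^(n-1) (1 - 1/n)`. The hypothesis on `c` says that
`1 - (1 - E)² + 1/(n-1) < e⁻ᶜ`; in particular `E < e⁻ᶜ`, so `c < 1`. For such `c` one has
`e⁻ᶜ ≤ (1 - c/n)^(n-1)` (`exp_neg_le_one_sub_div_pow`), and multiplying `e⁻ᶜ < 1` by `1 - 1/n`
loses less than `1/n < 1/(n-1)`.
-/

open Set

noncomputable section

/-- The payoff kernel `R(x,y)` on the unit square (eq. (3.1)). -/
def Rker (n : ℕ) (x y : ℝ) : ℝ :=
  if x = y then 1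
  else if y < x then (1 - x ^ (n - 1) * y) / (1 - y ^ n)
  else ((1 - y) / (1 - y ^ n)) * ((1 - x ^ n) / (1 - x))

/-- The exponent `n - 1`, rather than `n`, reverses the usual bound `(1 - c/n)ⁿ ≤ e⁻ᶜ`:
`1 + t ≤ eᵗ` at `t = c/(n-c)` gives `e^(-c/(n-c)) ≤ 1 - c/n`, and `(n-1)/(n-c) ≤ 1`. -/
theorem exp_neg_le_one_sub_div_pow {n : ℕ} (hn : 2 ≤ n) {c : ℝ} (hc0 : 0 ≤ c) (hc1 : c ≤ 1) :
    Real.exp (-c) ≤ (1 - c / (n : ℝ)) ^ (n - 1) := by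
  have hn' : (2 : ℝ) ≤ n := by exact_mod_cast hn
  have hd : 0 < (n : ℝ) - c := by linarith
  have hbase : Real.exp (-(c / (n - c))) ≤ 1 - c / (n : ℝ) := by
    have h := Real.add_one_le_exp (c / ((n : ℝ) - c))
    have heq : 1 - c / (n : ℝ) = (c / (n - c) + 1)⁻¹ := by
      have h1 : c / ((n : ℝ) - c) + 1 = n / (n - c) := by field_simp; ring
      rw [h1, inv_div]
      field_simp
    rw [Real.exp_neg, heq]
    exact inv_anti₀ (by positivity) h
  refine le_trans ?_ (pow_le_pow_left₀ (Real.exp_pos _).le hbase _)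
  rw [← Real.exp_nat_mul, Real.exp_le_exp, Nat.cast_sub (by omega), Nat.cast_one, mul_neg,
    neg_le_neg_iff, mul_div_assoc', div_le_iff₀ hd]
  nlinarith

/-- key estimate in the proof of Lemma 2: for `n ≥ 4`,
`c_n = −ln(1 − (1 − e^{−1})² + 1/(n−1))` and `0 < c < c_n`, with `x₀ = 1 − c/n` and
`y₀ = 1 − 1/n` one has
`R(x₀,y₀) = (1 − (1 − c/n)^{n−1}(1 − 1/n))/(1 − (1 − 1/n)ⁿ) < 1 − e^{−1}`. -/
theorem Rker_lt_one_sub_inv_e (n : ℕ) (hn : 4 ≤ n) (c : ℝ) (hc0 : 0 < c)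
    (hc : c < -Real.log (1 - (1 - Real.exp (-1)) ^ 2 + 1 / ((n : ℝ) - 1))) :
    Rker n (1 - c / n) (1 - 1 / n) =
        (1 - (1 - c / (n : ℝ)) ^ (n - 1) * (1 - 1 / (n : ℝ))) /
          (1 - (1 - 1 / (n : ℝ)) ^ n) ∧
      (1 - (1 - c / (n : ℝ)) ^ (n - 1) * (1 - 1 / (n : ℝ))) /
          (1 - (1 - 1 / (n : ℝ)) ^ n) < 1 - Real.exp (-1) := by
  have hn' : (4 : ℝ) ≤ n := by exact_mod_cast hn
  have hE0 := Real.exp_pos (-1)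
  have hE1 : Real.exp (-1) < 1 := Real.exp_lt_one_iff.mpr (by norm_num)
  have hinv0 : 0 < 1 / (n : ℝ) := by positivity
  have hinv1 : 1 / (n : ℝ) < 1 := by rw [div_lt_one (by linarith)]; linarith
  have hinv : 1 / (n : ℝ) < 1 / ((n : ℝ) - 1) :=
    one_div_lt_one_div_of_lt (by linarith) (by linarith)
  have hA : 1 - (1 - Real.exp (-1)) ^ 2 + 1 / ((n : ℝ) - 1) < Real.exp (-c) := by
    rw [← Real.log_lt_iff_lt_exp (by nlinarith)]
    linarith
  have hc1 : c < 1 := by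
    have h : Real.exp (-1) < Real.exp (-c) := by nlinarith
    linarith [Real.exp_lt_exp.mp h]
  have hyx : 1 - 1 / (n : ℝ) < 1 - c / n := by
    have : c / (n : ℝ) < 1 / n := by gcongr
    linarith
  refine ⟨by rw [Rker, if_neg hyx.ne', if_pos hyx], ?_⟩
  have hq : (1 - 1 / (n : ℝ)) ^ n ≤ Real.exp (-1) :=
    Real.one_sub_div_pow_le_exp_neg (by linarith)
  have hpow := exp_neg_le_one_sub_div_pow (by omega : 2 ≤ n) hc0.le hc1.le
  have hec : Real.exp (-c) < 1 := Real.exp_lt_one_iff.mpr (by linarith)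
  have hmul : Real.exp (-c) * (1 - 1 / (n : ℝ)) ≤
      (1 - c / (n : ℝ)) ^ (n - 1) * (1 - 1 / (n : ℝ)) :=
    mul_le_mul_of_nonneg_right hpow (by linarith)
  rw [div_lt_iff₀ (by linarith)]
  nlinarith [mul_nonneg (sub_nonneg.mpr hE1.le) (sub_nonneg.mpr hq),
    mul_pos (sub_pos.mpr hec) hinv0]
end
end
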